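/- For every relational vocabulary ρ and all k, ℓ, q ∈ ℕ there exist q*, r*, s* ∈ ℕ such that the following holds. Let B be a finite ρ-structure with n := |U(B)| ≥ 2, let D be a probability distribution on U(B)^k × {0,1}, and let ε, δ ∈ (0,1) and t ∈ ℕ with t ≥ s*·⌈log(n/δ)/ε²⌉. Let C be the set of all concepts ⟦φ(x̄; v̄)⟧^B with φ(x̄; ȳ) of quantifier rank at most q, |x̄| = k, |ȳ| = ℓ, v̄ ∈ U(B)^ℓ, and let H be the set of all concepts ⟦φ*(x̄; v̄*)⟧^B with φ*(x̄; ȳ) syntactically r*-local of quantifier rank at most q*, |x̄| = k, |ȳ| = ℓ, v̄* ∈ U(B)^ℓ. Then with probability at least 1 − δ over a training sequence T of t examples drawn i.i.d. from D, every H ∈ H with err_T(H) = min_{H' ∈ H} err_T(H') satisfies err_D(H) ≤ min_{C ∈ C} err_D(C) + ε, where err_D(G) := Pr_{(ū,c)∼D}[G(ū) ≠ c]. -/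

import Mathlib

open FirstOrder FirstOrder.Language

universe w

/-- The quantifier rank of a first-order (bounded) formula: the nesting depth of quantifiers. -/
def qRank {L : FirstOrder.Language} : ∀ {α : Type*} {n : ℕ}, L.BoundedFormula α n → ℕ
  | _, _, .falsum => 0
  | _, _, .equal _ _ => 0
  | _, _, .rel _ _ => 0
  | _, _, .imp f g => max (qRank f) (qRank g)
  | _, _, .all f => qRank f + 1

/-- Adjacency in the Gaifman graph of a structure: two distinct elements are adjacent iff
they occur together in some tuple of some relation. -/
def gaifmanAdj (L : FirstOrder.Language) (M : Type w) [L.Structure M] (a b : M) : Prop :=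
  a ≠ b ∧ ∃ (n : ℕ) (R : L.Relations n) (t : Fin n → M),
    Structure.RelMap R t ∧ (∃ i, t i = a) ∧ (∃ j, t j = b)

/-- `distLE L M r a b` means the distance between `a` and `b` in the Gaifman graph of `M`
is at most `r`. -/
def distLE (L : FirstOrder.Language) (M : Type w) [L.Structure M] : ℕ → M → M → Prop
  | 0, a, b => a = b
  | r + 1, a, b => a = b ∨ ∃ c, gaifmanAdj L M a c ∧ distLE L M r c b

theorem distLE_self (L : FirstOrder.Language) (M : Type w) [L.Structure M] (r : ℕ) (a : M) :
    distLE L M r a a := by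
  cases r with
  | zero => rfl
  | succ r => exact Or.inl rfl

/-- The `r`-neighbourhood of a tuple: all elements at Gaifman distance at most `r`
from some component of the tuple. -/
def nbhd (L : FirstOrder.Language) (M : Type w) [L.Structure M] (r : ℕ) {k : ℕ}
    (u : Fin k → M) : Set M :=
  {b | ∃ i, distLE L M r (u i) b}

/-- `IsDistFormula L r d` says that the formula `d`, with two free variables, expresses
that the Gaifman distance between its two arguments is at most `r` (this is the property
of the formula `δ_{≤r}`). -/
def IsDistFormula.{v} (L : FirstOrder.Language) (r : ℕ) (d : L.Formula (Fin 2)) : Prop :=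
  ∀ (M : Type v) [L.Structure M], ∀ a b : M, d.Realize ![a, b] ↔ distLE L M r a b

/-- The radius-`r` relativisation of a formula with free variables `x_0, …, x_{k-1}`,
relative to a formula `d = δ_{≤r}` expressing distance at most `r`: every (universal)
quantifier `∀ y ψ` is replaced by `∀ y (⋁_i δ_{≤r}(x_i, y) → ψ)` (and consequently every
existential quantifier `∃ y ψ` by `∃ y (⋁_i δ_{≤r}(x_i, y) ∧ ψ)`). -/
def relativize {L : FirstOrder.Language} (d : L.Formula (Fin 2)) :
    ∀ {k n : ℕ}, L.BoundedFormula (Fin k) n → L.BoundedFormula (Fin k) n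
  | _, _, .falsum => .falsum
  | _, _, .equal t₁ t₂ => .equal t₁ t₂
  | _, _, .rel R ts => .rel R ts
  | _, _, .imp f g => (relativize d f).imp (relativize d g)
  | k, n, .all f =>
      ((((List.finRange k).map fun i =>
          BoundedFormula.relabel (![Sum.inl i, Sum.inr (Fin.last n)] : Fin 2 → (Fin k) ⊕ (Fin (n + 1))) d).foldr
            (· ⊔ ·) ⊥).imp (relativize d f)).all

/-- A formula is syntactically `r`-local (w.r.t. the distance formula `d = δ_{≤r}`) if it is
the radius-`r` relativisation of some formula. -/
def SynLocal {L : FirstOrder.Language} (d : L.Formula (Fin 2)) {k : ℕ}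
    (φ : L.Formula (Fin k)) : Prop :=
  ∃ ψ : L.Formula (Fin k), φ = relativize d ψ

/-- The local `(q, r)`-type of a tuple `u` in `M`: the set of syntactically `r`-local formulas
(w.r.t. the distance formula `d = δ_{≤r}`) of quantifier rank at most `q` satisfied by `u`. -/
def ltp {L : FirstOrder.Language} (d : L.Formula (Fin 2)) (q : ℕ) (M : Type w) [L.Structure M]
    {k : ℕ} (u : Fin k → M) : Set (L.Formula (Fin k)) :=
  {φ | SynLocal d φ ∧ qRank φ ≤ q ∧ φ.Realize u}

/-- The first-order `q`-type of a tuple `u` in `M`: the set of formulas of quantifier rank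
at most `q` (with free variables among `x_0, …, x_{k-1}`) satisfied by `u`. -/
def ftp {L : FirstOrder.Language} (q : ℕ) (M : Type w) [L.Structure M]
    {k : ℕ} (u : Fin k → M) : Set (L.Formula (Fin k)) :=
  {φ | qRank φ ≤ q ∧ φ.Realize u}

/-- The union of two disjoint structures (realized as a structure on the sum type):
a relation holds of a tuple iff the tuple lies entirely in one part and the relation
holds there. -/
def sumStructure (L : FirstOrder.Language) [L.IsRelational] (M N : Type w)
    [L.Structure M] [L.Structure N] : L.Structure (M ⊕ N) where
  funMap f _ := isEmptyElim f
  RelMap R t :=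
    (∃ s, t = Sum.inl ∘ s ∧ Structure.RelMap R s) ∨
    (∃ s, t = Sum.inr ∘ s ∧ Structure.RelMap R s)

/-- The substructure of `M` induced on a subset `S`. -/
def inducedStructure (L : FirstOrder.Language) [L.IsRelational] {M : Type w} [L.Structure M]
    (S : Set M) : L.Structure S where
  funMap f _ := isEmptyElim f
  RelMap R t := Structure.RelMap R fun i => (t i : M)

/-- A formula `φ(x_1, …, x_k)` is `r`-local if for every structure `M` and every tuple `u`,
`M ⊨ φ(u)` iff the substructure induced on the `r`-neighbourhood of `u` satisfies `φ(u)`. -/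
def RLocal.{v} (L : FirstOrder.Language) [L.IsRelational] (r : ℕ) {k : ℕ}
    (φ : L.Formula (Fin k)) : Prop :=
  ∀ (M : Type v) [L.Structure M] (u : Fin k → M),
    φ.Realize u ↔
      (letI := inducedStructure L (nbhd L M r u)
       Formula.Realize (M := nbhd L M r u) φ
         (fun i => ⟨u i, i, distLE_self L M r (u i)⟩))


/-- The training error of the hypothesis `⟦φ(x̄; v)⟧^B` on the training sequence `T`:
the fraction of examples on which it is wrong. -/
noncomputable def trainErr {L : FirstOrder.Language} {B : Type w} [L.Structure B] {k ℓ t : ℕ}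
    (φ : L.Formula (Fin (k + ℓ))) (v : Fin ℓ → B) (T : Fin t → (Fin k → B) × Bool) : ℝ :=
  (Set.ncard {i : Fin t | ¬(φ.Realize (Fin.append (T i).1 v) ↔ (T i).2 = true)} : ℝ) / t

open MeasureTheory in
/-- The generalisation error of the hypothesis `⟦φ(x̄; v)⟧^B` with respect to a distribution
`D` on `U(B)^k × {0,1}`. -/
noncomputable def genErr {L : FirstOrder.Language} {B : Type w} [L.Structure B] {k ℓ : ℕ}
    [MeasurableSpace ((Fin k → B) × Bool)] (D : MeasureTheory.Measure ((Fin k → B) × Bool))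
    (φ : L.Formula (Fin (k + ℓ))) (v : Fin ℓ → B) : ℝ :=
  (D {p | ¬(φ.Realize (Fin.append p.1 v) ↔ p.2 = true)}).toReal

/-
Whether a formula of quantifier rank `q` holds at a tuple `u` depends only on the formulas of some
bounded rank that hold at `u` inside a neighbourhood of some bounded radius, as long as the
structure stays fixed. Indeed, in the Ehrenfeucht–Fraïssé game on two copies of the structure,
Duplicator can keep the neighbourhoods of the two positions equivalent while their radius shrinks.
She answers a move close to the old elements by a local move. When Spoiler plays `c` far from the
old elements, she needs some `d` of the local type of `c` far from their counterparts; if all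
elements of that type were close to those counterparts, then by the local equivalence and the
pigeonhole principle `c` would have been close to the old elements. Hence on each structure every
formula of rank `q` agrees with a syntactically local one, and the best local hypothesis is at least
as good as the best concept.

Up to equivalence there are only finitely many, say `N`, formulas of bounded rank, so there are at
most `N * n ^ ℓ` hypotheses. By Hoeffding's inequality and a union bound, the training errors of all
of them are within `ε / 2` of their generalisation errors with probability at least `1 - δ`, and
then minimising the training error is optimal up to `ε`.
-/

section Distance

variable {L : FirstOrder.Language} {M : Type*} [L.Structure M]

theorem gaifmanAdj.symm {a b : M} (h : gaifmanAdj L M a b) : gaifmanAdj L M b a := by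
  obtain ⟨hne, n, R, t, hR, ha, hb⟩ := h
  exact ⟨hne.symm, n, R, t, hR, hb, ha⟩

theorem gaifmanAdj.distLE_one {a b : M} (h : gaifmanAdj L M a b) : distLE L M 1 a b :=
  Or.inr ⟨b, h, rfl⟩

theorem distLE.mono {r s : ℕ} {a b : M} (h : distLE L M r a b) (hrs : r ≤ s) :
    distLE L M s a b := by
  induction r generalizing a s with
  | zero =>
    obtain rfl : a = b := h
    exact distLE_self L M s a
  | succ r ih =>
    obtain ⟨s, rfl⟩ := Nat.exists_eq_add_of_lt hrs
    exact h.imp_right fun ⟨c, hac, hcb⟩ => ⟨c, hac, ih hcb (by omega)⟩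

theorem distLE.trans {r s : ℕ} {a b c : M} (hab : distLE L M r a b) (hbc : distLE L M s b c) :
    distLE L M (r + s) a c := by
  induction r generalizing a with
  | zero =>
    obtain rfl : a = b := hab
    exact hbc.mono (Nat.le_add_left s 0)
  | succ r ih =>
    rcases hab with rfl | ⟨d, had, hdb⟩
    · exact hbc.mono (Nat.le_add_left s _)
    · rw [Nat.add_right_comm]
      exact Or.inr ⟨d, had, ih hdb⟩

theorem distLE.symm {r : ℕ} {a b : M} (h : distLE L M r a b) : distLE L M r b a := by
  induction r generalizing a with
  | zero => exact Eq.symm h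
  | succ r ih =>
    rcases h with rfl | ⟨c, hac, hcb⟩
    · exact distLE_self L M _ _
    · exact (ih hcb).trans hac.symm.distLE_one

theorem distLE_one_of_relMap {n : ℕ} {R : L.Relations n} {t : Fin n → M}
    (hR : Structure.RelMap R t) (i j : Fin n) : distLE L M 1 (t i) (t j) := by
  by_cases hij : t i = t j
  · exact Or.inl hij
  · exact gaifmanAdj.distLE_one ⟨hij, n, R, t, hR, ⟨i, rfl⟩, ⟨j, rfl⟩⟩

variable (L) in
/-- The `r`-neighbourhood of a set: all elements at Gaifman distance at most `r` from one of its
elements. -/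
def gaifmanNbhd (r : ℕ) (S : Set M) : Set M := {x | ∃ a ∈ S, distLE L M r a x}

theorem subset_gaifmanNbhd (r : ℕ) (S : Set M) : S ⊆ gaifmanNbhd L r S :=
  fun a ha => ⟨a, ha, distLE_self L M r a⟩

theorem gaifmanNbhd_mono {r s : ℕ} {S T : Set M} (hrs : r ≤ s) (hST : S ⊆ T) :
    gaifmanNbhd L r S ⊆ gaifmanNbhd L s T :=
  fun _ ⟨a, ha, hax⟩ => ⟨a, hST ha, hax.mono hrs⟩

theorem gaifmanNbhd_union (r : ℕ) (S T : Set M) :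
    gaifmanNbhd L r (S ∪ T) = gaifmanNbhd L r S ∪ gaifmanNbhd L r T := by
  ext x
  simp only [gaifmanNbhd, Set.mem_union, Set.mem_ofPred_eq, or_and_right, exists_or]

theorem mem_gaifmanNbhd_singleton {r : ℕ} {a x : M} :
    x ∈ gaifmanNbhd L r {a} ↔ distLE L M r a x := by
  simp only [gaifmanNbhd, Set.mem_ofPred_eq, Set.mem_singleton_iff, exists_eq_left]

theorem gaifmanNbhd_gaifmanNbhd_subset (r s : ℕ) (S : Set M) :
    gaifmanNbhd L r (gaifmanNbhd L s S) ⊆ gaifmanNbhd L (s + r) S :=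
  fun _ ⟨_, ⟨a, ha, hab⟩, hbx⟩ => ⟨a, ha, hab.trans hbx⟩

theorem gaifmanNbhd_insert_subset {r s r' : ℕ} (hr : s + r ≤ r') {S : Set M} {c : M}
    (hc : c ∈ gaifmanNbhd L s S) : gaifmanNbhd L r (insert c S) ⊆ gaifmanNbhd L r' S := by
  calc gaifmanNbhd L r (insert c S)
      ⊆ gaifmanNbhd L r (gaifmanNbhd L s S) :=
        gaifmanNbhd_mono le_rfl (Set.insert_subset hc (subset_gaifmanNbhd s S))
    _ ⊆ gaifmanNbhd L (s + r) S := gaifmanNbhd_gaifmanNbhd_subset r s S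
    _ ⊆ gaifmanNbhd L r' S := gaifmanNbhd_mono hr subset_rfl

theorem nbhd_eq_gaifmanNbhd_range (r : ℕ) {k : ℕ} (u : Fin k → M) :
    nbhd L M r u = gaifmanNbhd L r (Set.range u) := by
  ext x
  exact (Set.exists_range_iff (p := fun a => distLE L M r a x)).symm

variable (L) in
/-- Two sets are separated if no Gaifman edge joins them and they are disjoint; then no tuple of a
relation meets both. -/
def Separated (D E : Set M) : Prop := ∀ x ∈ D, ∀ y ∈ E, ¬ distLE L M 1 x y

theorem separated_gaifmanNbhd_singleton {r : ℕ} {S : Set M} {c : M}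
    (hc : c ∉ gaifmanNbhd L (2 * r + 1) S) :
    Separated L (gaifmanNbhd L r S) (gaifmanNbhd L r {c}) := by
  rintro x ⟨a, ha, hax⟩ y hcy hxy
  rw [mem_gaifmanNbhd_singleton] at hcy
  exact hc ⟨a, ha, ((hax.trans hxy).trans hcy.symm).mono (by omega)⟩

theorem Separated.ne {D E : Set M} (h : Separated L D E) {x y : M} (hx : x ∈ D) (hy : y ∈ E) :
    x ≠ y := by
  rintro rfl
  exact h x hx x hy (distLE_self L M 1 x)

theorem Separated.forall_mem_or_forall_mem {D E : Set M} (h : Separated L D E) {n : ℕ}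
    {R : L.Relations n} {t : Fin n → M} (hR : Structure.RelMap R t) (ht : ∀ i, t i ∈ D ∪ E) :
    (∀ i, t i ∈ D) ∨ ∀ i, t i ∈ E := by
  by_contra! hcon
  obtain ⟨⟨i, hi⟩, ⟨j, hj⟩⟩ := hcon
  exact h _ ((ht j).resolve_right hj) _ ((ht i).resolve_left hi) (distLE_one_of_relMap hR j i)

end Distance

section Game

open scoped SetRel

variable {L : FirstOrder.Language} {M N K : Type*} [L.Structure M] [L.Structure N] [L.Structure K]

variable (L) in
/-- A relation between two structures is a partial isomorphism if it preserves and reflects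
equality and all relation symbols. -/
structure IsPartialIso (P : SetRel M N) : Prop where
  eq_iff : ∀ {a a' b b'}, (a, b) ∈ P → (a', b') ∈ P → (a = a' ↔ b = b')
  relMap_iff : ∀ {n} (R : L.Relations n) {t t'}, (∀ i, (t i, t' i) ∈ P) →
    (Structure.RelMap R t ↔ Structure.RelMap R t')

namespace IsPartialIso

variable {P Q : SetRel M N}

theorem mono (h : IsPartialIso L Q) (hPQ : P ⊆ Q) : IsPartialIso L P where
  eq_iff hab hab' := h.eq_iff (hPQ hab) (hPQ hab')
  relMap_iff R _ _ ht := h.relMap_iff R fun i => hPQ (ht i)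

theorem inv (h : IsPartialIso L P) : IsPartialIso L P.inv where
  eq_iff hab hab' := (h.eq_iff hab hab').symm
  relMap_iff R _ _ ht := (h.relMap_iff R ht).symm

theorem of_subset_id {P : SetRel M M} (hP : P ⊆ SetRel.id) : IsPartialIso L P where
  eq_iff hab hab' := by rw [hP hab, hP hab']
  relMap_iff R t t' ht := by rw [show t = t' from funext fun i => hP (ht i)]

theorem comp {P : SetRel M N} {Q : SetRel N K} (h : IsPartialIso L P) (h' : IsPartialIso L Q) :
    IsPartialIso L (P ○ Q) where
  eq_iff := fun ⟨_, hab, hbc⟩ ⟨_, hab', hbc'⟩ => (h.eq_iff hab hab').trans (h'.eq_iff hbc hbc')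
  relMap_iff R t t' ht := by
    choose s hs hs' using ht
    exact (h.relMap_iff R hs).trans (h'.relMap_iff R hs')

theorem relMap_of_union {D E : Set M} (hDE : Separated L D E) (hP : ∀ p ∈ P, p.1 ∈ D)
    (hQ : ∀ p ∈ Q, p.1 ∈ E) (h : IsPartialIso L P) (h' : IsPartialIso L Q) {n : ℕ}
    {R : L.Relations n} {t : Fin n → M} {t' : Fin n → N} (ht : ∀ i, (t i, t' i) ∈ P ∪ Q)
    (hR : Structure.RelMap R t) : Structure.RelMap R t' := by
  rcases hDE.forall_mem_or_forall_mem hR fun i => (ht i).imp (hP _) (hQ _) with hD | hE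
  · exact (h.relMap_iff R fun i =>
      (ht i).resolve_right fun hi => hDE.ne (hD i) (hQ _ hi) rfl).1 hR
  · exact (h'.relMap_iff R fun i =>
      (ht i).resolve_left fun hi => hDE.ne (hP _ hi) (hE i) rfl).1 hR

theorem union {D E : Set M} {D' E' : Set N} (hDE : Separated L D E) (hDE' : Separated L D' E')
    (hP : P ⊆ D ×ˢ D') (hQ : Q ⊆ E ×ˢ E') (h : IsPartialIso L P) (h' : IsPartialIso L Q) :
    IsPartialIso L (P ∪ Q) where
  eq_iff := by
    rintro a a' b b' (hab | hab) (hab' | hab')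
    · exact h.eq_iff hab hab'
    · exact iff_of_false (hDE.ne (hP hab).1 (hQ hab').1) (hDE'.ne (hP hab).2 (hQ hab').2)
    · exact iff_of_false (hDE.ne (hP hab').1 (hQ hab).1).symm
        (hDE'.ne (hP hab').2 (hQ hab).2).symm
    · exact h'.eq_iff hab hab'
  relMap_iff R _ _ ht :=
    ⟨relMap_of_union hDE (fun _ hp => (hP hp).1) (fun _ hp => (hQ hp).1) h h' ht,
      relMap_of_union (P := P.inv) (Q := Q.inv) hDE' (fun _ hp => (hP hp).2)
        (fun _ hp => (hQ hp).2) h.inv h'.inv ht⟩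

end IsPartialIso

variable (L) in
/-- Duplicator wins the `j`-round Ehrenfeucht–Fraïssé game from the position `P` in which the
elements of the first structure are taken from `D` and those of the second one from `D'`. -/
def GameEquiv (D : Set M) (D' : Set N) : ℕ → SetRel M N → Prop
  | 0, P => IsPartialIso L P
  | j + 1, P => IsPartialIso L P ∧
      (∀ c ∈ D, ∃ d ∈ D', GameEquiv D D' j (insert (c, d) P)) ∧
      (∀ d ∈ D', ∃ c ∈ D, GameEquiv D D' j (insert (c, d) P))

variable (L) in
/-- Every relation symbol of the language has arity at most `A`. -/
def ArityLE (A : ℕ) : Prop := ∀ {n}, L.Relations n → n ≤ A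

theorem exists_arityLE (L : FirstOrder.Language) [Finite L.Symbols] : ∃ A, ArityLE L A := by
  have : Finite (Σ n, L.Relations n) :=
    Finite.of_injective (Sum.inr : _ → L.Symbols) Sum.inr_injective
  obtain ⟨A, hA⟩ := (Set.finite_range fun R : Σ n, L.Relations n => R.1).bddAbove
  exact ⟨A, fun {n} R => hA ⟨⟨n, R⟩, rfl⟩⟩

namespace GameEquiv

variable {D : Set M} {D' : Set N} {i j : ℕ} {P Q : SetRel M N}

theorem isPartialIso (h : GameEquiv L D D' j P) : IsPartialIso L P := by
  cases j with
  | zero => exact h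
  | succ j => exact h.1

theorem mono (h : GameEquiv L D D' j Q) (hPQ : P ⊆ Q) : GameEquiv L D D' j P := by
  induction j generalizing P Q with
  | zero => exact IsPartialIso.mono h hPQ
  | succ j ih =>
    obtain ⟨hiso, hforth, hback⟩ := h
    refine ⟨hiso.mono hPQ, fun c hc => ?_, fun d hd => ?_⟩
    · exact (hforth c hc).imp fun d => And.imp_right (ih · (Set.insert_subset_insert hPQ))
    · exact (hback d hd).imp fun c => And.imp_right (ih · (Set.insert_subset_insert hPQ))

theorem of_le (h : GameEquiv L D D' j P) (hij : i ≤ j) : GameEquiv L D D' i P := by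
  induction i generalizing j P with
  | zero => exact h.isPartialIso
  | succ i ih =>
    obtain _ | j := j
    · exact absurd hij (Nat.not_succ_le_zero i)
    obtain ⟨hiso, hforth, hback⟩ := h
    refine ⟨hiso, fun c hc => ?_, fun d hd => ?_⟩
    · exact (hforth c hc).imp fun d => And.imp_right (ih · (Nat.le_of_succ_le_succ hij))
    · exact (hback d hd).imp fun c => And.imp_right (ih · (Nat.le_of_succ_le_succ hij))

theorem inv (h : GameEquiv L D D' j P) : GameEquiv L D' D j P.inv := by
  induction j generalizing P with
  | zero => exact IsPartialIso.inv h
  | succ j ih =>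
    have insert_inv_subset (c : M) (d : N) : insert (d, c) P.inv ⊆ SetRel.inv (insert (c, d) P) :=
      Set.insert_subset (Or.inl rfl) fun _ hp => Or.inr hp
    obtain ⟨hiso, hforth, hback⟩ := h
    refine ⟨hiso.inv, fun d hd => ?_, fun c hc => ?_⟩
    · exact (hback d hd).imp fun c => And.imp_right fun h => (ih h).mono (insert_inv_subset c d)
    · exact (hforth c hc).imp fun d => And.imp_right fun h => (ih h).mono (insert_inv_subset c d)

theorem of_subset_id (D : Set M) (j : ℕ) {P : SetRel M M} (hP : P ⊆ SetRel.id) :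
    GameEquiv L D D j P := by
  induction j generalizing P with
  | zero => exact IsPartialIso.of_subset_id hP
  | succ j ih =>
    have copycat (c : M) : GameEquiv L D D j (insert (c, c) P) :=
      ih (Set.insert_subset (SetRel.mem_id.2 rfl) hP)
    exact ⟨.of_subset_id hP, fun c hc => ⟨c, hc, copycat c⟩, fun c hc => ⟨c, hc, copycat c⟩⟩

theorem comp {D'' : Set K} {P : SetRel M N} {Q : SetRel N K} (h : GameEquiv L D D' j P)
    (h' : GameEquiv L D' D'' j Q) : GameEquiv L D D'' j (P ○ Q) := by
  induction j generalizing P Q with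
  | zero => exact IsPartialIso.comp h h'
  | succ j ih =>
    have insert_comp_subset (c : M) (d : N) (e : K) :
        insert (c, e) (P ○ Q) ⊆ insert (c, d) P ○ insert (d, e) Q :=
      Set.insert_subset ⟨d, Or.inl rfl, Or.inl rfl⟩
        (SetRel.comp_subset_comp (Set.subset_insert _ _) (Set.subset_insert _ _))
    obtain ⟨hiso, hforth, hback⟩ := h
    obtain ⟨hiso', hforth', hback'⟩ := h'
    refine ⟨hiso.comp hiso', fun c hc => ?_, fun e he => ?_⟩
    · obtain ⟨d, hd, hcd⟩ := hforth c hc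
      obtain ⟨e, he, hde⟩ := hforth' d hd
      exact ⟨e, he, (ih hcd hde).mono (insert_comp_subset c d e)⟩
    · obtain ⟨d, hd, hde⟩ := hback' e he
      obtain ⟨c, hc, hcd⟩ := hback d hd
      exact ⟨c, hc, (ih hcd hde).mono (insert_comp_subset c d e)⟩

theorem union {E : Set M} {E' : Set N} (hDE : Separated L D E) (hDE' : Separated L D' E')
    (hP : P ⊆ D ×ˢ D') (hQ : Q ⊆ E ×ˢ E') (h : GameEquiv L D D' j P)
    (h' : GameEquiv L E E' j Q) : GameEquiv L (D ∪ E) (D' ∪ E') j (P ∪ Q) := by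
  induction j generalizing P Q with
  | zero => exact IsPartialIso.union hDE hDE' hP hQ h h'
  | succ j ih =>
    have answer_left {c d} (hc : c ∈ D) (hd : d ∈ D') (hcd : GameEquiv L D D' j (insert (c, d) P)) :
        GameEquiv L (D ∪ E) (D' ∪ E') j (insert (c, d) (P ∪ Q)) := by
      rw [← Set.insert_union]
      exact ih (Set.insert_subset ⟨hc, hd⟩ hP) hQ hcd (h'.of_le j.le_succ)
    have answer_right {c d} (hc : c ∈ E) (hd : d ∈ E')
        (hcd : GameEquiv L E E' j (insert (c, d) Q)) :
        GameEquiv L (D ∪ E) (D' ∪ E') j (insert (c, d) (P ∪ Q)) := by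
      rw [← Set.union_insert]
      exact ih hP (Set.insert_subset ⟨hc, hd⟩ hQ) (h.of_le j.le_succ) hcd
    refine ⟨.union hDE hDE' hP hQ h.1 h'.1, ?_, ?_⟩
    · rintro c (hc | hc)
      · exact (h.2.1 c hc).imp fun d ⟨hd, hcd⟩ => ⟨Or.inl hd, answer_left hc hd hcd⟩
      · exact (h'.2.1 c hc).imp fun d ⟨hd, hcd⟩ => ⟨Or.inr hd, answer_right hc hd hcd⟩
    · rintro d (hd | hd)
      · exact (h.2.2 d hd).imp fun c ⟨hc, hcd⟩ => ⟨Or.inl hc, answer_left hc hd hcd⟩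
      · exact (h'.2.2 d hd).imp fun c ⟨hc, hcd⟩ => ⟨Or.inr hc, answer_right hc hd hcd⟩

theorem exists_extend {n : ℕ} (h : GameEquiv L D D' (j + n) P) {t : Fin n → M}
    (ht : ∀ i, t i ∈ D) :
    ∃ (t' : Fin n → N) (Q : SetRel M N), P ⊆ Q ∧ (∀ i, (t i, t' i) ∈ Q) ∧ GameEquiv L D D' j Q := by
  induction n generalizing P with
  | zero => exact ⟨Fin.elim0, P, subset_rfl, fun i => i.elim0, h⟩
  | succ n ih =>
    obtain ⟨d, -, hd⟩ := h.2.1 (t 0) (ht 0)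
    obtain ⟨t', Q, hPQ, htQ, hQ⟩ := ih hd (t := Fin.tail t) fun i => ht i.succ
    exact ⟨Fin.cons d t', Q, (Set.subset_insert _ _).trans hPQ,
      Fin.cases (hPQ (Or.inl rfl)) htQ, hQ⟩

theorem exists_gaifmanAdj {A : ℕ} (hA : ArityLE L A) (h : GameEquiv L D D' (j + A) P) {a b : M}
    {a' : N} (ha : (a, a') ∈ P) (hD : ∀ x, distLE L M 1 a x → x ∈ D) (hab : gaifmanAdj L M a b) :
    ∃ b', gaifmanAdj L N a' b' ∧ GameEquiv L D D' j (insert (b, b') P) := by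
  obtain ⟨hne, n, R, t, hR, ⟨i, rfl⟩, ⟨i', rfl⟩⟩ := hab
  obtain ⟨t', Q, hPQ, htQ, hQ⟩ := exists_extend (h.of_le (Nat.add_le_add_left (hA R) j))
    fun k => hD (t k) (distLE_one_of_relMap hR i k)
  have hai : a' = t' i := (hQ.isPartialIso.eq_iff (hPQ ha) (htQ i)).1 rfl
  refine ⟨t' i', ⟨?_, n, R, t', (hQ.isPartialIso.relMap_iff R htQ).1 hR, ⟨i, hai.symm⟩,
    ⟨i', rfl⟩⟩, hQ.mono (Set.insert_subset (htQ i') hPQ)⟩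
  exact fun h => hne ((hQ.isPartialIso.eq_iff (hPQ ha) (htQ i')).2 h)

theorem distLE_forth {A s : ℕ} (hA : ArityLE L A) (hj : A * s ≤ j) (h : GameEquiv L D D' j P)
    {a b : M} {a' b' : N} (ha : (a, a') ∈ P) (hb : (b, b') ∈ P)
    (hD : ∀ x, distLE L M s a x → x ∈ D) (hab : distLE L M s a b) : distLE L N s a' b' := by
  induction s generalizing j P a a' with
  | zero => exact (h.isPartialIso.eq_iff ha hb).1 hab
  | succ s ih =>
    rcases hab with hab | ⟨c, hac, hcb⟩
    · exact Or.inl ((h.isPartialIso.eq_iff ha hb).1 hab)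
    · obtain ⟨c', hac', hc⟩ := exists_gaifmanAdj hA (h.of_le hj) ha
        (fun x hx => hD x (hx.mono (by omega))) hac
      exact Or.inr ⟨c', hac', ih le_rfl hc (Or.inl rfl) (Or.inr hb)
        (fun x hx => hD x (Or.inr ⟨c, hac, hx⟩)) hcb⟩

theorem distLE_back {A s : ℕ} (hA : ArityLE L A) (hj : A * s ≤ j) (h : GameEquiv L D D' j P)
    {a b : M} {a' b' : N} (ha : (a, a') ∈ P) (hb : (b, b') ∈ P)
    (hD' : ∀ y, distLE L N s a' y → y ∈ D') (hab : distLE L N s a' b') : distLE L M s a b :=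
  h.inv.distLE_forth hA hj ha hb hD' hab

theorem restrict {A r : ℕ} (hA : ArityLE L A) (hPQ : P ⊆ Q) (hD : gaifmanNbhd L r P.dom ⊆ D)
    (hD' : gaifmanNbhd L r P.cod ⊆ D') (h : GameEquiv L D D' (j + A * r) Q) :
    GameEquiv L (gaifmanNbhd L r P.dom) (gaifmanNbhd L r P.cod) j Q := by
  induction j generalizing Q with
  | zero => exact h.isPartialIso
  | succ j ih =>
    rw [Nat.add_right_comm] at h
    have hj : A * r ≤ j + A * r := Nat.le_add_left _ _
    refine ⟨h.1, ?_, ?_⟩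
    · rintro c ⟨a, ⟨a', ha⟩, hac⟩
      obtain ⟨d, -, hd⟩ := h.2.1 c (hD ⟨a, ⟨a', ha⟩, hac⟩)
      refine ⟨d, ⟨a', ⟨a, ha⟩, ?_⟩, ih (hPQ.trans (Set.subset_insert _ _)) hd⟩
      exact hd.distLE_forth hA hj (Or.inr (hPQ ha)) (Or.inl rfl)
        (fun x hx => hD ⟨a, ⟨a', ha⟩, hx⟩) hac
    · rintro d ⟨a', ⟨a, ha⟩, had⟩
      obtain ⟨c, -, hc⟩ := h.2.2 d (hD' ⟨a', ⟨a, ha⟩, had⟩)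
      refine ⟨c, ⟨a, ⟨a', ha⟩, ?_⟩, ih (hPQ.trans (Set.subset_insert _ _)) hc⟩
      exact hc.distLE_back hA hj (Or.inr (hPQ ha)) (Or.inl rfl)
        (fun x hx => hD' ⟨a', ⟨a, ha⟩, hx⟩) had

end GameEquiv

end Game

section Locality

variable {L : FirstOrder.Language} {M N : Type*} [L.Structure M] [L.Structure N]

variable (L) in
/-- Duplicator wins the `j`-round game from `P` played on the `r`-neighbourhoods of `P`. -/
def LocalEquiv (r j : ℕ) (P : SetRel M N) : Prop :=
  GameEquiv L (gaifmanNbhd L r P.dom) (gaifmanNbhd L r P.cod) j P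

theorem subset_gaifmanNbhd_dom_prod_cod (r : ℕ) (P : SetRel M N) :
    P ⊆ gaifmanNbhd L r P.dom ×ˢ gaifmanNbhd L r P.cod :=
  fun p hp => ⟨subset_gaifmanNbhd r _ ⟨p.2, hp⟩, subset_gaifmanNbhd r _ ⟨p.1, hp⟩⟩

theorem setRel_dom_union (P Q : SetRel M N) : SetRel.dom (P ∪ Q) = P.dom ∪ Q.dom := by
  ext a
  simp only [SetRel.mem_dom, Set.mem_union, exists_or]

theorem setRel_cod_union (P Q : SetRel M N) : SetRel.cod (P ∪ Q) = P.cod ∪ Q.cod := by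
  ext b
  simp only [SetRel.mem_cod, Set.mem_union, exists_or]

theorem setRel_dom_singleton (a : M) (b : N) : SetRel.dom {(a, b)} = {a} := by
  ext x
  simp

theorem setRel_cod_singleton (a : M) (b : N) : SetRel.cod {(a, b)} = {b} := by
  ext x
  simp

theorem GameEquiv.localEquiv {A r i j : ℕ} {D : Set M} {D' : Set N} {P Q : SetRel M N}
    (hA : ArityLE L A) (hi : j + A * r ≤ i) (hPQ : P ⊆ Q) (hD : gaifmanNbhd L r P.dom ⊆ D)
    (hD' : gaifmanNbhd L r P.cod ⊆ D') (h : GameEquiv L D D' i Q) : LocalEquiv L r j P :=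
  ((h.of_le hi).restrict hA hPQ hD hD').mono hPQ

namespace LocalEquiv

variable {A r r' s j j' : ℕ}

theorem inv {P : SetRel M N} (h : LocalEquiv L r j P) : LocalEquiv L r j P.inv :=
  GameEquiv.inv h

theorem mono {P Q : SetRel M N} (hA : ArityLE L A) (hr : r ≤ r') (hj : j + A * r ≤ j')
    (hPQ : P ⊆ Q) (h : LocalEquiv L r' j' Q) : LocalEquiv L r j P :=
  GameEquiv.localEquiv hA hj hPQ (gaifmanNbhd_mono hr (SetRel.dom_mono hPQ))
    (gaifmanNbhd_mono hr (SetRel.cod_mono hPQ)) h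

theorem singleton_refl (r j : ℕ) (a : M) : LocalEquiv L r j {(a, a)} := by
  rw [LocalEquiv, setRel_dom_singleton, setRel_cod_singleton]
  exact .of_subset_id _ _ (Set.singleton_subset_iff.2 rfl)

theorem singleton_trans {K : Type*} [L.Structure K] {a : M} {b : N} {c : K}
    (h : LocalEquiv L r j {(a, b)}) (h' : LocalEquiv L r j {(b, c)}) :
    LocalEquiv L r j {(a, c)} := by
  rw [LocalEquiv, setRel_dom_singleton, setRel_cod_singleton] at h h' ⊢
  exact (h.comp h').mono (Set.singleton_subset_iff.2 ⟨b, rfl, rfl⟩)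

theorem insert_of_far {P : SetRel M N} {c : M} {d : N} (h : LocalEquiv L r j P)
    (hcd : LocalEquiv L r j {(c, d)}) (hc : c ∉ gaifmanNbhd L (2 * r + 1) P.dom)
    (hd : d ∉ gaifmanNbhd L (2 * r + 1) P.cod) : LocalEquiv L r j (insert (c, d) P) := by
  rw [← Set.union_singleton, LocalEquiv, setRel_dom_union, setRel_cod_union, gaifmanNbhd_union,
    gaifmanNbhd_union]
  refine GameEquiv.union ?_ ?_ (subset_gaifmanNbhd_dom_prod_cod r P)
    (subset_gaifmanNbhd_dom_prod_cod r _) h hcd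
  · rw [setRel_dom_singleton]
    exact separated_gaifmanNbhd_singleton hc
  · rw [setRel_cod_singleton]
    exact separated_gaifmanNbhd_singleton hd

theorem exists_insert_of_near {P : SetRel M N} (hA : ArityLE L A) (hr : s + r ≤ r')
    (h : LocalEquiv L r' (j + A * r' + 1) P) {a c : M} {b : N} (hab : (a, b) ∈ P)
    (hac : distLE L M s a c) : ∃ d, distLE L N s b d ∧ LocalEquiv L r j (insert (c, d) P) := by
  have hAs : A * s ≤ A * r' := Nat.mul_le_mul_left A (by omega)
  have hAr : A * r ≤ A * r' := Nat.mul_le_mul_left A (by omega)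
  obtain ⟨d, -, hd⟩ := h.2.1 c ⟨a, ⟨b, hab⟩, hac.mono (by omega)⟩
  have hbd : distLE L N s b d := hd.distLE_forth hA (by omega) (Or.inr hab) (Or.inl rfl)
    (fun x hx => ⟨a, ⟨b, hab⟩, hx.mono (by omega)⟩) hac
  refine ⟨d, hbd, hd.localEquiv hA (by omega) subset_rfl ?_ ?_⟩
  · rw [← Set.singleton_union, setRel_dom_union, setRel_dom_singleton, Set.singleton_union]
    exact gaifmanNbhd_insert_subset hr ⟨a, ⟨b, hab⟩, hac⟩
  · rw [← Set.singleton_union, setRel_cod_union, setRel_cod_singleton, Set.singleton_union]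
    exact gaifmanNbhd_insert_subset hr ⟨b, ⟨a, hab⟩, hbd⟩

end LocalEquiv

theorem exists_iterate_eq_iterate {G : Type*} [Finite G] (f : G → G) (p : G) :
    ∃ a e, a ≤ Nat.card G ∧ f^[a] p = f^[a] (f^[e + 1] p) := by
  obtain ⟨i, i', hne, heq⟩ : ∃ i i' : Fin (Nat.card G + 1), i ≠ i' ∧ f^[i] p = f^[i'] p := by
    have := Fintype.ofFinite G
    exact Fintype.exists_ne_map_eq_of_card_lt _ (by simp [Nat.card_eq_fintype_card])
  wlog hlt : i < i' generalizing i i'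
  · exact this i' i hne.symm heq.symm (lt_of_le_of_ne (not_lt.1 hlt) hne.symm)
  refine ⟨i, i' - i - 1, by omega, ?_⟩
  rw [heq, ← Function.iterate_add_apply]
  congr 2
  omega

section Transfer

variable {G : Type*} {R m : ℕ} {x y : G → M} {f : G → G}

theorem distLE_of_iterate_eq (hxy : ∀ p, distLE L M R (x p) (y (f p)))
    (htransfer : ∀ p p' s, s ≤ 2 * R * m → distLE L M s (x p) (x p') → distLE L M s (y p) (y p'))
    {n : ℕ} (hn : n ≤ m) {p p' : G} (h : f^[n] p = f^[n] p') :
    distLE L M (2 * R * n) (y p) (y p') := by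
  induction n generalizing p p' with
  | zero =>
    obtain rfl : p = p' := h
    exact distLE_self L M _ _
  | succ n ih =>
    have hy : distLE L M (2 * R * n) (y (f p)) (y (f p')) := ih (by omega) h
    have hx : distLE L M (2 * R * (n + 1)) (x p) (x p') := by
      convert ((hxy p).trans hy).trans (hxy p').symm using 1
      ring
    exact htransfer p p' _ (Nat.mul_le_mul_left _ hn) hx

theorem exists_distLE_of_transfer [Finite G] (hm : Nat.card G ≤ m)
    (hxy : ∀ p, distLE L M R (x p) (y (f p)))
    (htransfer : ∀ p p' s, s ≤ 2 * R * m → distLE L M s (x p) (x p') → distLE L M s (y p) (y p'))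
    (p : G) : ∃ p', distLE L M ((2 * m + 1) * R) (x p') (y p) := by
  obtain ⟨a, e, ha, heq⟩ := exists_iterate_eq_iterate f p
  have hy : distLE L M (2 * R * a) (y (f^[e + 1] p)) (y p) :=
    distLE_of_iterate_eq hxy htransfer (ha.trans hm) heq.symm
  rw [Function.iterate_succ_apply'] at hy
  refine ⟨f^[e] p, ((hxy _).trans hy).mono ?_⟩
  calc R + 2 * R * a ≤ R + 2 * R * m := by gcongr; exact ha.trans hm
    _ = (2 * m + 1) * R := by ring

end Transfer

-- Map a pair `(a, b) ∈ P` with `b` near `T` to a pair `(a', b')` such that `b'` is near the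
-- counterpart of that element of `T` close to `a`; iterating this map must eventually repeat.
theorem subset_gaifmanNbhd_dom_of_subset_cod {m R : ℕ} {P : SetRel M M} (hP : P.encard ≤ m)
    {T : Set M} (hT : T ⊆ gaifmanNbhd L R P.cod)
    (hback : ∀ {a b}, (a, b) ∈ P → ∀ x ∈ T, distLE L M R b x → ∃ y ∈ T, distLE L M R a y)
    (htransfer : ∀ {a b a' b'}, (a, b) ∈ P → (a', b') ∈ P → ∀ s ≤ 4 * R * m,
      distLE L M s a a' → distLE L M s b b') :
    T ⊆ gaifmanNbhd L ((4 * m + 3) * R) P.dom := by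
  let G := {p : P // ∃ x ∈ T, distLE L M R p.1.2 x}
  have hPfin : P.Finite := Set.finite_of_encard_le_coe hP
  have : Finite P := hPfin
  have hG : Nat.card G ≤ m := by
    refine (Finite.card_subtype_le _).trans ?_
    rwa [Nat.card_coe_set_eq, ← ENat.natCast_le_natCast, hPfin.cast_ncard_eq]
  have exists_next (p : G) : ∃ p' : G, distLE L M (2 * R) p.1.1.1 p'.1.1.2 := by
    obtain ⟨⟨⟨a, b⟩, hab⟩, x, hxT, hbx⟩ := p
    obtain ⟨y, hyT, hay⟩ := hback hab x hxT hbx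
    obtain ⟨b', ⟨a', hab'⟩, hby⟩ := hT hyT
    exact ⟨⟨⟨⟨a', b'⟩, hab'⟩, y, hyT, hby⟩, (hay.trans hby.symm).mono (by omega)⟩
  choose f hf using exists_next
  intro c hc
  obtain ⟨b, ⟨a, hab⟩, hbc⟩ := hT hc
  obtain ⟨p', hp'⟩ := exists_distLE_of_transfer hG hf
    (fun p p' s hs => htransfer p.1.2 p'.1.2 s (hs.trans_eq (by ring)))
    ⟨⟨⟨a, b⟩, hab⟩, c, hc, hbc⟩
  refine ⟨p'.1.1.1, ⟨p'.1.1.2, p'.1.2⟩, ?_⟩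
  convert hp'.trans hbc using 1
  ring

-- If `c` is far from `P`, some element of its local type must be far from the second components:
-- otherwise the previous lemma, applied to that type, would place `c` itself near `P`.
theorem LocalEquiv.exists_insert_of_far {A m r r' j : ℕ} (hA : ArityLE L A)
    (hr' : (4 * m + 3) * (2 * r + 1) + r ≤ r') {P : SetRel M M} (hP : P.encard ≤ m)
    (h : LocalEquiv L r' (j + 2 * (A * r') + 1) P) {c : M}
    (hc : c ∉ gaifmanNbhd L ((4 * m + 3) * (2 * r + 1)) P.dom) :
    ∃ d, LocalEquiv L r j (insert (c, d) P) := by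
  set R := 2 * r + 1
  have hR : R ≤ (4 * m + 3) * R := Nat.le_mul_of_pos_left R (by omega)
  have hAr : A * r ≤ A * r' := Nat.mul_le_mul_left A (by omega)
  suffices ∃ d, LocalEquiv L r j {(c, d)} ∧ d ∉ gaifmanNbhd L R P.cod by
    obtain ⟨d, hcd, hd⟩ := this
    exact ⟨d, (h.mono hA (by omega) (by omega) subset_rfl).insert_of_far hcd
      (fun hcP => hc (gaifmanNbhd_mono hR subset_rfl hcP)) hd⟩
  by_contra! hcon
  refine hc (subset_gaifmanNbhd_dom_of_subset_cod hP (T := {x | LocalEquiv L r j {(c, x)}}) hcon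
    (fun {a b} hab x hx hbx => ?_) (fun {a b a' b'} hab hab' s hs haa' => ?_)
    (.singleton_refl r j c))
  · obtain ⟨y, hay, hxy⟩ := LocalEquiv.exists_insert_of_near (P := P.inv) (r := r) (r' := r')
      (j := j + A * r') hA (by omega) (by convert h.inv using 1; ring) hab hbx
    have hxy' : LocalEquiv L r j {(x, y)} :=
      hxy.mono hA le_rfl (by omega) (Set.singleton_subset_iff.2 (Or.inl rfl))
    exact ⟨y, hx.singleton_trans hxy', hay⟩
  · have hsr : s ≤ r' := by
      have : 4 * R * m ≤ (4 * m + 3) * R := by nlinarith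
      omega
    have hAs : A * s ≤ A * r' := Nat.mul_le_mul_left A hsr
    exact GameEquiv.distLE_forth hA (by omega) h hab hab'
      (fun z hz => ⟨a, ⟨b, hab⟩, hz.mono hsr⟩) haa'

theorem LocalEquiv.exists_insert {A m r r' j : ℕ} (hA : ArityLE L A)
    (hr' : (4 * m + 3) * (2 * r + 1) + r ≤ r') {P : SetRel M M} (hP : P.encard ≤ m)
    (h : LocalEquiv L r' (j + 2 * (A * r') + 1) P) (c : M) :
    ∃ d, LocalEquiv L r j (insert (c, d) P) := by
  by_cases hc : c ∈ gaifmanNbhd L ((4 * m + 3) * (2 * r + 1)) P.dom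
  · obtain ⟨a, ⟨b, hab⟩, hac⟩ := hc
    obtain ⟨d, -, hd⟩ := LocalEquiv.exists_insert_of_near (j := j) hA hr'
      (h.of_le (by omega)) hab hac
    exact ⟨d, hd⟩
  · exact h.exists_insert_of_far hA hr' hP hc

theorem exists_gameEquiv_of_localEquiv {A : ℕ} (hA : ArityLE L A) (q m : ℕ) :
    ∃ r j : ℕ, ∀ (M : Type w) [L.Structure M] (P : SetRel M M), P.encard ≤ m →
      LocalEquiv L r j P → GameEquiv L Set.univ Set.univ q P := by
  induction q generalizing m with
  | zero => exact ⟨0, 0, fun M _ P _ h => h⟩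
  | succ q ih =>
    obtain ⟨r, j, ih⟩ := ih (m + 1)
    set r' := (4 * m + 3) * (2 * r + 1) + r with hr'
    refine ⟨r', j + 2 * (A * r') + 1, fun M _ P hP h => ?_⟩
    have forth {P : SetRel M M} (hP : P.encard ≤ m) (h : LocalEquiv L r' (j + 2 * (A * r') + 1) P)
        (c : M) : ∃ d, GameEquiv L Set.univ Set.univ q (insert (c, d) P) := by
      obtain ⟨d, hd⟩ := h.exists_insert hA hr'.ge hP c
      exact ⟨d, ih M _ ((Set.encard_insert_le _ _).trans (by push_cast; gcongr)) hd⟩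
    have hPinv : P.inv.encard ≤ m := by
      rwa [SetRel.inv, ← Set.image_swap_eq_preimage_swap, Prod.swap_injective.encard_image]
    refine ⟨h.1, fun c _ => ?_, fun d _ => ?_⟩
    · exact (forth hP h c).imp fun d hd => ⟨Set.mem_univ d, hd⟩
    · obtain ⟨c, hc⟩ := forth hPinv h.inv d
      exact ⟨c, Set.mem_univ c, hc.inv.mono (Set.insert_subset (Or.inl rfl) fun p => Or.inr)⟩

end Locality

section Relativisation

variable {L : FirstOrder.Language} {α β : Type*} {n : ℕ}

theorem qRank_relabel {m : ℕ} (g : α → β ⊕ Fin n) (φ : L.BoundedFormula α m) :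
    qRank (φ.relabel g) = qRank φ := by
  unfold BoundedFormula.relabel
  induction φ with
  | falsum => simp only [BoundedFormula.mapTermRel, qRank]
  | equal => simp only [BoundedFormula.mapTermRel, qRank]
  | rel => simp only [BoundedFormula.mapTermRel, qRank]
  | imp f g ihf ihg => simp only [BoundedFormula.mapTermRel, qRank, ihf, ihg]
  | all f ih => simp [BoundedFormula.mapTermRel, qRank, ih]

theorem qRank_not (φ : L.BoundedFormula α n) : qRank φ.not = qRank φ := by
  simp only [BoundedFormula.not, Bot.bot, qRank, zero_le, sup_of_le_left]

theorem qRank_of_isAtomic {φ : L.BoundedFormula α n} (h : φ.IsAtomic) : qRank φ = 0 := by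
  cases h with
  | equal => simp only [Term.bdEqual, qRank]
  | rel => simp only [Relations.boundedFormula, qRank]

theorem qRank_sup (φ ψ : L.BoundedFormula α n) : qRank (φ ⊔ ψ) = max (qRank φ) (qRank ψ) := by
  change qRank (φ.not.imp ψ) = _
  rw [qRank, qRank_not]

theorem qRank_foldr_sup_le {q : ℕ} {l : List (L.BoundedFormula α n)} (h : ∀ φ ∈ l, qRank φ ≤ q) :
    qRank (l.foldr (· ⊔ ·) ⊥) ≤ q := by
  induction l with
  | nil => simp only [List.foldr_nil, Bot.bot, qRank, zero_le]
  | cons φ l ih =>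
    rw [List.forall_mem_cons] at h
    exact (qRank_sup _ _).trans_le (max_le h.1 (ih h.2))

theorem qRank_relativize_le (d : L.Formula (Fin 2)) {k : ℕ} (φ : L.BoundedFormula (Fin k) n) :
    qRank (relativize d φ) ≤ qRank φ + qRank d := by
  induction φ with
  | falsum => simp only [relativize, qRank, zero_le]
  | equal => simp only [relativize, qRank, zero_le]
  | rel => simp only [relativize, qRank, zero_le]
  | imp f g ihf ihg =>
    simp only [relativize, qRank]
    omega
  | all f ih =>
    simp only [relativize, qRank, Nat.add_right_comm _ 1, Nat.add_le_add_iff_right]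
    refine max_le ((qRank_foldr_sup_le fun φ hφ => ?_).trans (Nat.le_add_left _ _)) ih
    obtain ⟨i, -, rfl⟩ := List.mem_map.1 hφ
    exact (qRank_relabel _ _).le

variable {M : Type*} [L.Structure M]

/-- Satisfaction of a formula when the quantifiers range over the set `D` only; the free variables
may take values outside of `D`. -/
def RealizeOn (D : Set M) : ∀ {n}, L.BoundedFormula α n → (α → M) → (Fin n → M) → Prop
  | _, .falsum, _, _ => False
  | _, .equal t₁ t₂, v, xs => t₁.realize (Sum.elim v xs) = t₂.realize (Sum.elim v xs)
  | _, .rel R ts, v, xs => Structure.RelMap R fun i => (ts i).realize (Sum.elim v xs)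
  | _, .imp f g, v, xs => RealizeOn D f v xs → RealizeOn D g v xs
  | _, .all f, v, xs => ∀ c ∈ D, RealizeOn D f v (Fin.snoc xs c)

theorem realizeOn_univ (φ : L.BoundedFormula α n) (v : α → M) (xs : Fin n → M) :
    RealizeOn Set.univ φ v xs ↔ φ.Realize v xs := by
  induction φ with
  | falsum => rfl
  | equal => rfl
  | rel => rfl
  | imp f g ihf ihg => exact imp_congr (ihf xs) (ihg xs)
  | all f ih => exact forall_congr' fun c => (forall_prop_of_true (Set.mem_univ c)).trans (ih _)

theorem IsDistFormula.realize_relabel {r : ℕ} {d : L.Formula (Fin 2)} {M : Type w} [L.Structure M]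
    (hd : IsDistFormula.{w} L r d) (i : α) (v : α → M) (xs : Fin n → M) (c : M) :
    (BoundedFormula.relabel (![Sum.inl i, Sum.inr (Fin.last n)] : Fin 2 → α ⊕ Fin (n + 1))
      d).Realize v (Fin.snoc xs c) ↔ distLE L M r (v i) c := by
  rw [← hd M (v i) c, Formula.Realize, BoundedFormula.realize_relabel]
  refine iff_of_eq ?_
  congr 1
  · funext j
    fin_cases j
    · rfl
    · simp
  · exact Subsingleton.elim _ _

theorem IsDistFormula.realize_relativize {r : ℕ} {d : L.Formula (Fin 2)} {M : Type w}
    [L.Structure M] (hd : IsDistFormula.{w} L r d) {k : ℕ} (φ : L.BoundedFormula (Fin k) n)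
    (v : Fin k → M) (xs : Fin n → M) :
    (relativize d φ).Realize v xs ↔ RealizeOn (nbhd L M r v) φ v xs := by
  induction φ with
  | falsum => simp only [relativize]; rfl
  | equal => simp only [relativize]; rfl
  | rel => simp only [relativize]; rfl
  | imp f g ihf ihg =>
    simp only [relativize]
    exact imp_congr (ihf xs) (ihg xs)
  | all f ih =>
    simp only [relativize, BoundedFormula.realize_all, BoundedFormula.realize_imp,
      BoundedFormula.realize_foldr_sup, List.mem_map, List.mem_finRange, true_and,
      exists_exists_eq_and, hd.realize_relabel, ih]
    rfl

end Relativisation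

section EhrenfeuchtFraisse

variable {L : FirstOrder.Language} {α : Type*} {n q : ℕ}

variable (L α n) in
/-- A structure together with a set `domain` over which quantifiers range and an assignment of the
free variables of a bounded formula, the named ones by `v` and the de Bruijn indices by `xs`:
everything needed to evaluate such a formula by `RealizeOn`. -/
structure Interpretation where
  carrier : Type w
  [struc : L.Structure carrier]
  domain : Set carrier
  v : α → carrier
  xs : Fin n → carrier

attribute [instance] Interpretation.struc

namespace Interpretation

/-- The joint assignment of the named variables and the de Bruijn indices. -/
def assign (I : Interpretation.{w} L α n) : α ⊕ Fin n → I.carrier := Sum.elim I.v I.xs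

/-- Satisfaction of a bounded formula in an interpretation. -/
def Sat (I : Interpretation.{w} L α n) (φ : L.BoundedFormula α n) : Prop :=
  RealizeOn I.domain φ I.v I.xs

/-- The interpretation extended by the value of one more variable. -/
def snoc (I : Interpretation.{w} L α n) (c : I.carrier) : Interpretation.{w} L α (n + 1) where
  carrier := I.carrier
  domain := I.domain
  v := I.v
  xs := Fin.snoc I.xs c

/-- Two interpretations satisfy the same formulas of quantifier rank at most `q`. -/
def RankEquiv (q : ℕ) (I J : Interpretation.{w} L α n) : Prop :=
  ∀ φ : L.BoundedFormula α n, qRank φ ≤ q → (I.Sat φ ↔ J.Sat φ)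

/-- The position of the Ehrenfeucht–Fraïssé game in which the values of each variable in the two
interpretations face each other. -/
def pairing (I J : Interpretation.{w} L α n) : SetRel I.carrier J.carrier :=
  Set.range fun i => (I.assign i, J.assign i)

variable {I J : Interpretation.{w} L α n}

theorem sat_not {φ : L.BoundedFormula α n} : I.Sat φ.not ↔ ¬ I.Sat φ := Iff.rfl

theorem sat_all {φ : L.BoundedFormula α (n + 1)} :
    I.Sat φ.all ↔ ∀ c ∈ I.domain, (I.snoc c).Sat φ := Iff.rfl

theorem sat_foldr_sup {l : List (L.BoundedFormula α n)} :
    I.Sat (l.foldr (· ⊔ ·) ⊥) ↔ ∃ φ ∈ l, I.Sat φ := by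
  induction l with
  | nil => exact iff_of_false id (by simp)
  | cons φ l ih =>
    rw [List.exists_mem_cons_iff, ← ih]
    exact or_iff_not_imp_left.symm

theorem RankEquiv.refl (q : ℕ) (I : Interpretation.{w} L α n) : I.RankEquiv q I :=
  fun _ _ => Iff.rfl

theorem RankEquiv.symm (h : I.RankEquiv q J) : J.RankEquiv q I :=
  fun φ hφ => (h φ hφ).symm

theorem RankEquiv.trans {K : Interpretation.{w} L α n} (h : I.RankEquiv q J)
    (h' : J.RankEquiv q K) : I.RankEquiv q K :=
  fun φ hφ => (h φ hφ).trans (h' φ hφ)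

theorem rankEquiv_of_forall_imp (h : ∀ φ, qRank φ ≤ q → I.Sat φ → J.Sat φ) : I.RankEquiv q J :=
  fun φ hφ => ⟨h φ hφ, not_imp_not.1 (h φ.not ((qRank_not φ).trans_le hφ))⟩

theorem pairing_snoc (c : I.carrier) (d : J.carrier) :
    pairing (I.snoc c) (J.snoc d) = insert (c, d) (pairing I J) := by
  ext p
  constructor
  · rintro ⟨i | i, rfl⟩
    · exact Or.inr ⟨Sum.inl i, rfl⟩
    · cases i using Fin.lastCases with
      | last => exact Or.inl (by simp [assign, snoc])
      | cast i => exact Or.inr ⟨Sum.inr i, by simp [assign, snoc]⟩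
  · rintro (rfl | ⟨i | i, rfl⟩)
    · exact ⟨Sum.inr (Fin.last n), by simp [assign, snoc]⟩
    · exact ⟨Sum.inl i, rfl⟩
    · exact ⟨Sum.inr i.castSucc, by simp [assign, snoc]⟩

end Interpretation

open Interpretation

section FiniteRank

theorem exists_disjunction {Φ : Set (L.BoundedFormula α n)} (hΦ : Φ.Finite)
    (hq : ∀ φ ∈ Φ, qRank φ ≤ q) :
    ∃ ψ : L.BoundedFormula α n, qRank ψ ≤ q ∧
      ∀ I : Interpretation.{w} L α n, I.Sat ψ ↔ ∃ φ ∈ Φ, I.Sat φ := by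
  obtain ⟨l, rfl⟩ := hΦ.exists_finset_coe
  refine ⟨l.toList.foldr (· ⊔ ·) ⊥, qRank_foldr_sup_le (by simpa using hq), fun I => ?_⟩
  simp [sat_foldr_sup]

theorem exists_conjunction {Φ : Set (L.BoundedFormula α n)} (hΦ : Φ.Finite)
    (hq : ∀ φ ∈ Φ, qRank φ ≤ q) :
    ∃ ψ : L.BoundedFormula α n, qRank ψ ≤ q ∧
      ∀ I : Interpretation.{w} L α n, I.Sat ψ ↔ ∀ φ ∈ Φ, I.Sat φ := by
  obtain ⟨ψ, hψ, hsat⟩ := exists_disjunction.{w} (q := q) (hΦ.image BoundedFormula.not)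
    (Set.forall_mem_image.2 fun φ hφ => (qRank_not φ).trans_le (hq φ hφ))
  refine ⟨ψ.not, (qRank_not ψ).trans_le hψ, fun I => ?_⟩
  simp [sat_not, hsat]

theorem exists_finite_representatives_of_determined {W F : Type*} (sat : W → F → Prop)
    {C A : Set F} (hA : A.Finite)
    (hCA : ∀ φ ∈ C, ∀ I J, (∀ a ∈ A, sat I a ↔ sat J a) → (sat I φ ↔ sat J φ)) :
    ∃ Φ ⊆ C, Φ.Finite ∧ ∀ φ ∈ C, ∃ ψ ∈ Φ, ∀ I, sat I ψ ↔ sat I φ := by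
  let models (φ : F) : Set (Set A) := (fun I => {a : A | sat I a}) '' {I | sat I φ}
  have imp_of_models {φ ψ} (hψ : ψ ∈ C) (h : models φ ⊆ models ψ) (I : W) (hI : sat I φ) :
      sat I ψ := by
    obtain ⟨J, hJ, hIJ⟩ := h ⟨I, hI, rfl⟩
    exact (hCA ψ hψ J I fun a ha => iff_of_eq (congrArg (⟨a, ha⟩ ∈ ·) hIJ)).1 hJ
  have : Finite A := hA
  obtain ⟨Φ, hΦC, hΦ⟩ := (Set.surjOn_image models C).exists_bijOn_subset
  refine ⟨Φ, hΦC, hΦ.finite_iff_finite.2 (Set.toFinite _), fun φ hφ => ?_⟩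
  obtain ⟨ψ, hψ, hψφ⟩ := hΦ.surjOn ⟨φ, hφ, rfl⟩
  exact ⟨ψ, hψ, fun I => ⟨imp_of_models hφ hψφ.le I, imp_of_models (hΦC hψ) hψφ.ge I⟩⟩

theorem sat_iff_of_isAtomic_iff_of_all_iff {m : ℕ} {Φ : Set (L.BoundedFormula α (m + 1))}
    (hΦ : ∀ f, qRank f + 1 ≤ q →
      ∃ g ∈ Φ, ∀ I : Interpretation.{w} L α (m + 1), I.Sat g ↔ I.Sat f)
    {I J : Interpretation.{w} L α m} (hatom : ∀ φ, φ.IsAtomic → (I.Sat φ ↔ J.Sat φ))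
    (hall : ∀ f ∈ Φ, I.Sat f.all ↔ J.Sat f.all) {φ : L.BoundedFormula α m} (hφ : qRank φ ≤ q) :
    I.Sat φ ↔ J.Sat φ := by
  induction φ with
  | falsum => rfl
  | equal t₁ t₂ => exact hatom _ (.equal t₁ t₂)
  | rel R ts => exact hatom _ (.rel R ts)
  | imp f g ihf ihg =>
    rw [qRank, max_le_iff] at hφ
    exact imp_congr (ihf hΦ hatom hall hφ.1) (ihg hΦ hatom hall hφ.2)
  | all f _ =>
    rw [qRank] at hφ
    obtain ⟨g, hg, hgf⟩ := hΦ f hφ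
    simpa only [sat_all, hgf] using hall g hg

variable [L.IsRelational]

theorem exists_var_eq (t : L.Term α) : ∃ i, Term.var i = t := by
  cases t with
  | var i => exact ⟨i, rfl⟩
  | func f _ => exact isEmptyElim f

variable [Finite L.Symbols] [Finite α]

theorem finite_setOf_isAtomic : {φ : L.BoundedFormula α n | φ.IsAtomic}.Finite := by
  have : Finite (Σ l, L.Relations l) :=
    Finite.of_injective (Sum.inr : _ → L.Symbols) Sum.inr_injective
  have : Finite (L.Term (α ⊕ Fin n)) := Finite.of_surjective _ exists_var_eq
  refine ((Set.finite_range fun t : L.Term (α ⊕ Fin n) × L.Term (α ⊕ Fin n) =>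
    t.1.bdEqual t.2).union (Set.finite_range
      fun R : Σ R : Σ l, L.Relations l, Fin R.1 → L.Term (α ⊕ Fin n) =>
        R.1.2.boundedFormula R.2)).subset ?_
  rintro _ (⟨t₁, t₂⟩ | ⟨R, ts⟩)
  · exact Or.inl ⟨(t₁, t₂), rfl⟩
  · exact Or.inr ⟨⟨⟨_, R⟩, ts⟩, rfl⟩

variable (L α) in
theorem exists_finite_representatives (q n : ℕ) :
    ∃ Φ : Set (L.BoundedFormula α n), Φ.Finite ∧ (∀ ψ ∈ Φ, qRank ψ ≤ q) ∧
      ∀ φ, qRank φ ≤ q → ∃ ψ ∈ Φ, ∀ I : Interpretation.{w} L α n, I.Sat ψ ↔ I.Sat φ := by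
  induction q generalizing n with
  | zero =>
    obtain ⟨Φ, hΦ, hfin, hrep⟩ := exists_finite_representatives_of_determined
      (Interpretation.Sat.{w} (L := L) (α := α) (n := n)) (C := {φ | qRank φ ≤ 0})
      finite_setOf_isAtomic fun φ hφ I J h =>
        sat_iff_of_isAtomic_iff_of_all_iff (Φ := ∅) (by simp) h (by simp) hφ
    exact ⟨Φ, hfin, hΦ, hrep⟩
  | succ q ih =>
    obtain ⟨Φ', hfin', -, hrep'⟩ := ih (n + 1)
    obtain ⟨Φ, hΦ, hfin, hrep⟩ := exists_finite_representatives_of_determined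
      (Interpretation.Sat.{w} (L := L) (α := α) (n := n)) (C := {φ | qRank φ ≤ q + 1})
      (finite_setOf_isAtomic.union (hfin'.image BoundedFormula.all)) fun φ hφ I J h =>
        sat_iff_of_isAtomic_iff_of_all_iff (fun f hf => hrep' f (Nat.le_of_succ_le_succ hf))
          (fun a ha => h a (Or.inl ha)) (fun f hf => h _ (Or.inr ⟨f, hf, rfl⟩)) hφ
    exact ⟨Φ, hfin, hΦ, hrep⟩

theorem exists_sat_iff_rankEquiv (q : ℕ) (I : Interpretation.{w} L α n) :
    ∃ χ : L.BoundedFormula α n, qRank χ ≤ q ∧ ∀ J, J.Sat χ ↔ I.RankEquiv q J := by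
  obtain ⟨Φ, hfin, hΦ, hrep⟩ := exists_finite_representatives.{w} L α q n
  obtain ⟨χ, hχ, hsat⟩ := exists_conjunction.{w} (q := q) (hfin.inter_of_left {ψ | I.Sat ψ})
    fun ψ hψ => hΦ ψ hψ.1
  refine ⟨χ, hχ, fun J => (hsat J).trans ⟨fun h => rankEquiv_of_forall_imp fun φ hφ hI => ?_,
    fun h ψ hψ => (h ψ (hΦ ψ hψ.1)).1 hψ.2⟩⟩
  obtain ⟨ψ, hψ, hψφ⟩ := hrep φ hφ
  exact (hψφ J).1 (h ψ ⟨hψ, (hψφ I).2 hI⟩)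

theorem exists_sat_iff_of_rankEquiv_invariant {S : Interpretation.{w} L α n → Prop}
    (hS : ∀ I J, I.RankEquiv q J → S I → S J) :
    ∃ ψ : L.BoundedFormula α n, qRank ψ ≤ q ∧ ∀ I, I.Sat ψ ↔ S I := by
  obtain ⟨Φ, hfin, hΦ, hrep⟩ := exists_finite_representatives.{w} L α q n
  obtain ⟨ψ, hψ, hsat⟩ := exists_disjunction.{w} (q := q)
    (hfin.inter_of_left {φ | ∀ J : Interpretation.{w} L α n, J.Sat φ → S J})
    fun φ hφ => hΦ φ hφ.1
  refine ⟨ψ, hψ, fun I => (hsat I).trans ⟨fun ⟨φ, hφ, hI⟩ => hφ.2 I hI, fun hI => ?_⟩⟩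
  obtain ⟨χ, hχ, hsatχ⟩ := exists_sat_iff_rankEquiv q I
  obtain ⟨φ, hφ, hφχ⟩ := hrep χ hχ
  exact ⟨φ, ⟨hφ, fun J hJ => hS I J ((hsatχ J).1 ((hφχ J).1 hJ)) hI⟩,
    (hφχ I).2 ((hsatχ I).2 (.refl q I))⟩

end FiniteRank

variable [L.IsRelational] {I J : Interpretation.{w} L α n}

theorem isPartialIso_pairing_iff :
    IsPartialIso L (pairing I J) ↔
      ∀ φ : L.BoundedFormula α n, φ.IsAtomic → (I.Sat φ ↔ J.Sat φ) := by
  constructor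
  · rintro h _ (⟨t₁, t₂⟩ | ⟨R, ts⟩)
    · obtain ⟨i₁, rfl⟩ := exists_var_eq t₁
      obtain ⟨i₂, rfl⟩ := exists_var_eq t₂
      exact h.eq_iff ⟨i₁, rfl⟩ ⟨i₂, rfl⟩
    · choose i hi using fun k => exists_var_eq (ts k)
      obtain rfl : (fun k => Term.var (i k)) = ts := funext hi
      exact h.relMap_iff R fun k => ⟨i k, rfl⟩
  · refine fun h => ⟨?_, fun R t t' ht => ?_⟩
    · rintro _ _ _ _ ⟨i, ⟨⟩⟩ ⟨i', ⟨⟩⟩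
      exact h _ (.equal (Term.var i) (Term.var i'))
    · choose i hi using ht
      obtain rfl : I.assign ∘ i = t := funext fun k => congrArg Prod.fst (hi k)
      obtain rfl : J.assign ∘ i = t' := funext fun k => congrArg Prod.snd (hi k)
      exact h _ (.rel R fun k => Term.var (i k))

theorem Interpretation.RankEquiv.isPartialIso (h : I.RankEquiv q J) :
    IsPartialIso L (pairing I J) :=
  isPartialIso_pairing_iff.2 fun φ hφ => h φ ((qRank_of_isAtomic hφ).trans_le (Nat.zero_le q))

theorem GameEquiv.rankEquiv (h : GameEquiv L I.domain J.domain q (pairing I J)) :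
    I.RankEquiv q J := by
  intro φ hφ
  induction φ generalizing q with
  | falsum => rfl
  | equal t₁ t₂ => exact isPartialIso_pairing_iff.1 h.isPartialIso _ (.equal t₁ t₂)
  | rel R ts => exact isPartialIso_pairing_iff.1 h.isPartialIso _ (.rel R ts)
  | imp f g ihf ihg =>
    rw [qRank, max_le_iff] at hφ
    exact imp_congr (ihf h hφ.1) (ihg h hφ.2)
  | all f ih =>
    rw [qRank] at hφ
    obtain _ | q := q
    · exact absurd hφ (Nat.not_succ_le_zero _)
    have sat_snoc_iff {c d} (h' : GameEquiv L I.domain J.domain q (insert (c, d) (pairing I J))) :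
        (I.snoc c).Sat f ↔ (J.snoc d).Sat f := by
      rw [← pairing_snoc] at h'
      exact ih h' (Nat.le_of_succ_le_succ hφ)
    constructor
    · intro hI d hd
      obtain ⟨c, hc, hcd⟩ := h.2.2 d hd
      exact (sat_snoc_iff hcd).1 (hI c hc)
    · intro hJ c hc
      obtain ⟨d, hd, hcd⟩ := h.2.1 c hc
      exact (sat_snoc_iff hcd).2 (hJ d hd)

variable [Finite L.Symbols] [Finite α]

theorem Interpretation.RankEquiv.exists_snoc (h : I.RankEquiv (q + 1) J) {c : I.carrier}
    (hc : c ∈ I.domain) : ∃ d ∈ J.domain, (I.snoc c).RankEquiv q (J.snoc d) := by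
  obtain ⟨χ, hχ, hsat⟩ := exists_sat_iff_rankEquiv q (I.snoc c)
  by_contra! hcon
  have hrank : qRank χ.not.all ≤ q + 1 := by
    rw [qRank, qRank_not]
    exact Nat.succ_le_succ hχ
  have hJ : J.Sat χ.not.all := fun d hd => mt (hsat (J.snoc d)).1 (hcon d hd)
  exact (h _ hrank).2 hJ c hc ((hsat _).2 (.refl q _))

theorem Interpretation.RankEquiv.gameEquiv (h : I.RankEquiv q J) :
    GameEquiv L I.domain J.domain q (pairing I J) := by
  induction q generalizing n with
  | zero => exact h.isPartialIso
  | succ q ih =>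
    have answer {c d} (hcd : (I.snoc c).RankEquiv q (J.snoc d)) :
        GameEquiv L I.domain J.domain q (insert (c, d) (pairing I J)) := by
      rw [← pairing_snoc]
      exact ih hcd
    refine ⟨h.isPartialIso, fun c hc => ?_, fun d hd => ?_⟩
    · exact (h.exists_snoc hc).imp fun d => And.imp_right answer
    · exact (h.symm.exists_snoc hd).imp fun c => And.imp_right fun hcd => answer hcd.symm

end EhrenfeuchtFraisse

section LocalNormalForm

open Interpretation

variable {L : FirstOrder.Language} {k : ℕ}

variable (L) in
/-- The evaluation of formulas at the tuple `u` with quantifiers restricted to `D`. -/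
def tupleInterpretation {M : Type w} [L.Structure M] (D : Set M) (u : Fin k → M) :
    Interpretation.{w} L (Fin k) 0 where
  carrier := M
  domain := D
  v := u
  xs := default

variable {M : Type w} [L.Structure M]

theorem sat_tupleInterpretation_univ (φ : L.Formula (Fin k)) (u : Fin k → M) :
    (tupleInterpretation L Set.univ u).Sat φ ↔ φ.Realize u :=
  realizeOn_univ φ u default

theorem sat_tupleInterpretation_nbhd {r : ℕ} {d : L.Formula (Fin 2)}
    (hd : IsDistFormula.{w} L r d) (φ : L.Formula (Fin k)) (u : Fin k → M) :
    (tupleInterpretation L (nbhd L M r u) u).Sat φ ↔ Formula.Realize (relativize d φ) u :=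
  (hd.realize_relativize φ u default).symm

theorem pairing_tupleInterpretation (D D' : Set M) (u u' : Fin k → M) :
    pairing (tupleInterpretation L D u) (tupleInterpretation L D' u') =
      Set.range fun i => (u i, u' i) := by
  ext p
  constructor
  · rintro ⟨i | i, rfl⟩
    · exact ⟨i, rfl⟩
    · exact i.elim0
  · rintro ⟨i, rfl⟩
    exact ⟨Sum.inl i, rfl⟩

theorem exists_rankEquiv_univ_of_rankEquiv_nbhd (L : FirstOrder.Language) [L.IsRelational]
    [Finite L.Symbols] (k q : ℕ) :
    ∃ r j : ℕ, ∀ (M : Type w) [L.Structure M] (u u' : Fin k → M),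
      (tupleInterpretation L (nbhd L M r u) u).RankEquiv j
        (tupleInterpretation L (nbhd L M r u') u') →
      (tupleInterpretation L Set.univ u).RankEquiv q (tupleInterpretation L Set.univ u') := by
  obtain ⟨A, hA⟩ := exists_arityLE L
  obtain ⟨r, j, hrj⟩ := exists_gameEquiv_of_localEquiv.{w} hA q k
  refine ⟨r, j, fun M _ u u' h => ?_⟩
  have hcard : (Set.range fun i => (u i, u' i)).encard ≤ k := by
    rw [← Set.image_univ]
    exact (Set.encard_image_le _ _).trans (by simp)
  have hlocal : LocalEquiv L r j (Set.range fun i => (u i, u' i)) := by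
    have hdom : SetRel.dom (Set.range fun i => (u i, u' i)) = Set.range u := by
      ext
      simp
    have hcod : SetRel.cod (Set.range fun i => (u i, u' i)) = Set.range u' := by
      ext
      simp
    rw [LocalEquiv, hdom, hcod, ← nbhd_eq_gaifmanNbhd_range, ← nbhd_eq_gaifmanNbhd_range,
      ← pairing_tupleInterpretation (L := L) (nbhd L M r u) (nbhd L M r u')]
    exact h.gameEquiv
  have hglobal := hrj M _ hcard hlocal
  rw [← pairing_tupleInterpretation (L := L) Set.univ Set.univ] at hglobal
  exact hglobal.rankEquiv

theorem exists_synLocal_equiv [L.IsRelational] [Finite L.Symbols] (k q : ℕ)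
    {dlt : ℕ → L.Formula (Fin 2)} (hdlt : ∀ r, IsDistFormula.{w} L r (dlt r)) :
    ∃ r j : ℕ, ∀ (M : Type w) [L.Structure M] (φ : L.Formula (Fin k)), qRank φ ≤ q →
      ∃ φ' : L.Formula (Fin k), SynLocal (dlt r) φ' ∧ qRank φ' ≤ j ∧
        ∀ u : Fin k → M, φ'.Realize u ↔ φ.Realize u := by
  obtain ⟨r, j, hrj⟩ := exists_rankEquiv_univ_of_rankEquiv_nbhd.{w} L k q
  refine ⟨r, j + qRank (dlt r), fun M _ φ hφ => ?_⟩
  let loc (u : Fin k → M) := tupleInterpretation L (nbhd L M r u) u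
  obtain ⟨ψ, hψ, hsat⟩ := exists_sat_iff_of_rankEquiv_invariant (q := j)
    (S := fun I => ∃ u, φ.Realize u ∧ (loc u).RankEquiv j I)
    fun I J hIJ ⟨u, hu, huI⟩ => ⟨u, hu, huI.trans hIJ⟩
  refine ⟨relativize (dlt r) ψ, ⟨ψ, rfl⟩, (qRank_relativize_le _ _).trans (by gcongr), fun u => ?_⟩
  rw [← sat_tupleInterpretation_nbhd (hdlt r), hsat]
  refine ⟨fun ⟨u', hu', h⟩ => ?_, fun hu => ⟨u, hu, .refl j _⟩⟩
  rw [← sat_tupleInterpretation_univ] at hu' ⊢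
  exact (hrj M u' u h φ hφ).1 hu'

end LocalNormalForm

section UniformConvergence

open MeasureTheory ProbabilityTheory

variable {Ω : Type*} [MeasurableSpace Ω] (D : Measure Ω) [IsProbabilityMeasure D] (t : ℕ)

theorem measureReal_pi_le_sum_sub_integral_le {f : Ω → ℝ} (hf : AEMeasurable f D) {a b : ℝ}
    (hab : ∀ᵐ ω ∂D, f ω ∈ Set.Icc a b) {η : ℝ} (hη : 0 ≤ η) :
    (Measure.pi fun _ : Fin t => D).real {T | t * η ≤ ∑ i, (f (T i) - ∫ ω, f ω ∂D)} ≤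
      Real.exp (-(2 * t * η ^ 2 / (b - a) ^ 2)) := by
  have hsub (i : Fin t) : HasSubgaussianMGF (fun T : Fin t → Ω => f (T i) - ∫ ω, f ω ∂D)
      ((‖b - a‖₊ / 2) ^ 2) (Measure.pi fun _ : Fin t => D) := by
    have heval := measurePreserving_eval (fun _ : Fin t => D) i
    refine HasSubgaussianMGF.of_map (Y := Function.eval i) (X := fun ω => f ω - ∫ ω, f ω ∂D)
      heval.measurable.aemeasurable ?_
    rw [heval.map_eq]
    exact hasSubgaussianMGF_of_mem_Icc hf hab
  have hindep : iIndepFun (fun (i : Fin t) (T : Fin t → Ω) => f (T i) - ∫ ω, f ω ∂D)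
      (Measure.pi fun _ : Fin t => D) :=
    iIndepFun_pi (X := fun _ ω => f ω - ∫ ω, f ω ∂D) fun _ => hf.sub_const _
  refine (HasSubgaussianMGF.measure_sum_ge_le_of_iIndepFun (s := Finset.univ) hindep
    (fun i _ => hsub i) (by positivity)).trans_eq ?_
  congr 1
  rcases eq_or_ne (t : ℝ) 0 with ht | ht
  · simp [ht]
  · rcases eq_or_ne (b - a) 0 with hba | hba
    · simp [hba]
    · simp only [Finset.sum_const, Finset.card_univ, Fintype.card_fin, nsmul_eq_mul,
        NNReal.coe_mul, NNReal.coe_natCast, NNReal.coe_pow, NNReal.coe_div, coe_nnnorm,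
        Real.norm_eq_abs, NNReal.coe_ofNat]
      field_simp
      rw [sq_abs]

theorem measureReal_pi_le_abs_sum_sub_integral_le {f : Ω → ℝ} (hf : AEMeasurable f D) {a b : ℝ}
    (hab : ∀ᵐ ω ∂D, f ω ∈ Set.Icc a b) {η : ℝ} (hη : 0 ≤ η) :
    (Measure.pi fun _ : Fin t => D).real {T | t * η ≤ |∑ i, (f (T i) - ∫ ω, f ω ∂D)|} ≤
      2 * Real.exp (-(2 * t * η ^ 2 / (b - a) ^ 2)) := by
  have hupper := measureReal_pi_le_sum_sub_integral_le D t hf hab hη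
  have hlower := measureReal_pi_le_sum_sub_integral_le D t hf.neg (a := -b) (b := -a)
    (hab.mono fun ω hω => ⟨neg_le_neg hω.2, neg_le_neg hω.1⟩) hη
  have sum_neg (T : Fin t → Ω) : ∑ i, ((-f) (T i) - ∫ ω, (-f) ω ∂D) =
      -∑ i, (f (T i) - ∫ ω, f ω ∂D) := by
    rw [← Finset.sum_neg_distrib]
    refine Finset.sum_congr rfl fun i _ => ?_
    simp only [Pi.neg_apply, integral_neg]
    ring
  simp only [sum_neg, neg_sub_neg] at hlower
  rw [two_mul]
  refine le_trans ?_ (add_le_add hupper hlower)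
  simp only [le_abs, Set.ofPred_or]
  exact measureReal_union_le _ _

variable {t}

/-- The fraction of entries of the sample `T` that lie in `S`; it is `0` for the empty sample. -/
noncomputable def empiricalFreq {Ω : Type*} (T : Fin t → Ω) (S : Set Ω) : ℝ :=
  (Set.ncard {i | T i ∈ S} : ℝ) / t

theorem sum_indicator_eq_mul_empiricalFreq {Ω : Type*} (T : Fin t → Ω) (S : Set Ω) :
    ∑ i, S.indicator (1 : Ω → ℝ) (T i) = t * empiricalFreq T S := by
  classical
  have hcard : ∑ i, S.indicator (1 : Ω → ℝ) (T i) = Set.ncard {i | T i ∈ S} := by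
    simp [Set.indicator_apply, Set.ncard_eq_toFinset_card']
  rcases t.eq_zero_or_pos with rfl | ht
  · simp
  · rw [hcard, empiricalFreq, mul_div_cancel₀ _ (by positivity)]

theorem measureReal_pi_le_abs_empiricalFreq_sub_le {S : Set Ω} (hS : MeasurableSet S) {η : ℝ}
    (hη : 0 ≤ η) :
    (Measure.pi fun _ : Fin t => D).real {T | η ≤ |empiricalFreq T S - D.real S|} ≤
      2 * Real.exp (-(2 * t * η ^ 2)) := by
  have hmem (ω : Ω) : S.indicator (1 : Ω → ℝ) ω ∈ Set.Icc (0 : ℝ) 1 :=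
    ⟨Set.indicator_nonneg (fun _ _ => zero_le_one) ω,
      Set.indicator_le_self' (fun _ _ => zero_le_one) ω⟩
  have hoeffding := measureReal_pi_le_abs_sum_sub_integral_le D t
    (measurable_one.indicator hS).aemeasurable (.of_forall hmem) hη
  simp only [sub_zero, one_pow, div_one] at hoeffding
  refine (measureReal_mono fun T hT => ?_).trans hoeffding
  rw [Set.mem_ofPred_eq, Finset.sum_sub_distrib, sum_indicator_eq_mul_empiricalFreq,
    integral_indicator_one hS, Finset.sum_const, Finset.card_univ, Fintype.card_fin, nsmul_eq_mul,
    ← mul_sub, abs_mul, Nat.abs_cast]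
  exact mul_le_mul_of_nonneg_left hT t.cast_nonneg

theorem le_measureReal_pi_forall_abs_empiricalFreq_sub_le {ι : Type*} [Finite ι] {S : ι → Set Ω}
    (hS : ∀ a, MeasurableSet (S a)) {η δ : ℝ} (hη : 0 ≤ η)
    (hδ : Nat.card ι * (2 * Real.exp (-(2 * t * η ^ 2))) ≤ δ) :
    1 - δ ≤ (Measure.pi fun _ : Fin t => D).real
      {T | ∀ a, |empiricalFreq T (S a) - D.real (S a)| ≤ η} := by
  have := Fintype.ofFinite ι
  set μ := Measure.pi fun _ : Fin t => D
  set good := {T : Fin t → Ω | ∀ a, |empiricalFreq T (S a) - D.real (S a)| ≤ η}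
  have hbad : μ.real goodᶜ ≤ δ := by
    calc μ.real goodᶜ
        ≤ μ.real (⋃ a, {T | η ≤ |empiricalFreq T (S a) - D.real (S a)|}) := by
          refine measureReal_mono fun T hT => ?_
          obtain ⟨a, ha⟩ := not_forall.1 hT
          exact Set.mem_iUnion.2 ⟨a, (not_le.1 ha).le⟩
      _ ≤ ∑ a, μ.real {T | η ≤ |empiricalFreq T (S a) - D.real (S a)|} :=
          measureReal_iUnion_fintype_le _
      _ ≤ ∑ _a : ι, 2 * Real.exp (-(2 * t * η ^ 2)) :=
          Finset.sum_le_sum fun a _ => measureReal_pi_le_abs_empiricalFreq_sub_le D (hS a) hη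
      _ ≤ δ := by simpa using hδ
  have htotal : 1 ≤ μ.real good + μ.real goodᶜ := by
    rw [← probReal_univ (μ := μ), ← Set.union_compl_self good]
    exact measureReal_union_le _ _
  linarith

end UniformConvergence

section SampleSize

theorem pow_le_exp_of_mul_ceil_le {m t : ℕ} {x ε : ℝ} (hx : 0 < x) (hε : 0 < ε)
    (ht : 2 * m * ⌈Real.log x / ε ^ 2⌉₊ ≤ t) : x ^ m ≤ Real.exp (2 * t * (ε / 2) ^ 2) := by
  have ht' : 2 * (m : ℝ) * ⌈Real.log x / ε ^ 2⌉₊ ≤ t := by exact_mod_cast ht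
  have hceil : Real.log x ≤ ⌈Real.log x / ε ^ 2⌉₊ * ε ^ 2 :=
    (div_le_iff₀ (by positivity)).1 (Nat.le_ceil _)
  rw [← Real.exp_log hx, ← Real.exp_nat_mul, Real.exp_le_exp]
  calc (m : ℝ) * Real.log x
      ≤ m * (⌈Real.log x / ε ^ 2⌉₊ * ε ^ 2) := by gcongr
    _ = 2 * m * ⌈Real.log x / ε ^ 2⌉₊ * (ε ^ 2 / 2) := by ring
    _ ≤ t * (ε ^ 2 / 2) := by gcongr
    _ = 2 * t * (ε / 2) ^ 2 := by ring

theorem card_mul_exp_le {n N l t : ℕ} (hn : 2 ≤ n) {ε δ : ℝ} (hε : 0 < ε)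
    (hδ : δ ∈ Set.Ioo (0 : ℝ) 1)
    (ht : 2 * (N + l + 2) * ⌈Real.log (n / δ) / ε ^ 2⌉₊ ≤ t) :
    N * n ^ l * (2 * Real.exp (-(2 * t * (ε / 2) ^ 2))) ≤ δ := by
  obtain ⟨hδ₀, hδ₁⟩ := hδ
  set x : ℝ := n / δ with hx
  have hn' : (2 : ℝ) ≤ n := by exact_mod_cast hn
  have hnx : n ≤ x := le_div_self n.cast_nonneg hδ₀ hδ₁.le
  have hδx : 1 / δ ≤ x := by
    rw [hx]
    gcongr
    linarith
  have hN : (N : ℝ) ≤ x ^ N := by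
    calc (N : ℝ) ≤ 2 ^ N := by exact_mod_cast Nat.lt_two_pow_self.le
      _ ≤ x ^ N := by gcongr; exact hn'.trans hnx
  have hexp : x ^ (N + l + 2) ≤ Real.exp (2 * t * (ε / 2) ^ 2) :=
    pow_le_exp_of_mul_ceil_le (by linarith) hε ht
  rw [Real.exp_neg, ← mul_assoc, ← div_eq_mul_inv, div_le_iff₀ (Real.exp_pos _)]
  calc (N : ℝ) * n ^ l * 2 = δ * (N * n ^ l * (2 * (1 / δ))) := by field_simp
    _ ≤ δ * (x ^ N * x ^ l * (x * x)) := by gcongr; exact hn'.trans hnx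
    _ = δ * x ^ (N + l + 2) := by ring
    _ ≤ δ * Real.exp (2 * t * (ε / 2) ^ 2) := by gcongr

end SampleSize

section Learning

open MeasureTheory

variable {L : FirstOrder.Language} {k ℓ : ℕ}

/-- The labelled examples misclassified by the hypothesis `⟦φ(x̄; v)⟧^B`. -/
def errorSet {B : Type*} [L.Structure B] (φ : L.Formula (Fin (k + ℓ))) (v : Fin ℓ → B) :
    Set ((Fin k → B) × Bool) :=
  {p | ¬(φ.Realize (Fin.append p.1 v) ↔ p.2 = true)}

theorem trainErr_eq_empiricalFreq {B : Type*} [L.Structure B] {t : ℕ}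
    (φ : L.Formula (Fin (k + ℓ))) (v : Fin ℓ → B) (T : Fin t → (Fin k → B) × Bool) :
    trainErr φ v T = empiricalFreq T (errorSet φ v) := rfl

theorem genErr_eq_measureReal {B : Type*} [L.Structure B] [MeasurableSpace ((Fin k → B) × Bool)]
    (D : Measure ((Fin k → B) × Bool)) (φ : L.Formula (Fin (k + ℓ))) (v : Fin ℓ → B) :
    genErr D φ v = D.real (errorSet φ v) := rfl

theorem errorSet_congr {B : Type*} [L.Structure B] {φ ψ : L.Formula (Fin (k + ℓ))}
    (h : ∀ u : Fin (k + ℓ) → B, φ.Realize u ↔ ψ.Realize u) (v : Fin ℓ → B) :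
    errorSet φ v = errorSet ψ v := by
  ext p
  exact not_congr (iff_congr (h _) Iff.rfl)

theorem exists_forall_abs_trainErr_sub_genErr_le (L : FirstOrder.Language) [L.IsRelational]
    [Finite L.Symbols] (k ℓ q : ℕ) :
    ∃ s : ℕ, ∀ (B : Type w) [L.Structure B] [Fintype B] [MeasurableSpace ((Fin k → B) × Bool)]
      [MeasurableSingletonClass ((Fin k → B) × Bool)], 2 ≤ Fintype.card B →
      ∀ (D : Measure ((Fin k → B) × Bool)) [IsProbabilityMeasure D] {ε δ : ℝ}, 0 < ε →
      δ ∈ Set.Ioo (0 : ℝ) 1 → ∀ {t : ℕ},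
      s * ⌈Real.log ((Fintype.card B : ℝ) / δ) / ε ^ 2⌉₊ ≤ t →
      1 - δ ≤ (Measure.pi fun _ : Fin t => D).real
        {T | ∀ (φ : L.Formula (Fin (k + ℓ))) (v : Fin ℓ → B), qRank φ ≤ q →
          |trainErr φ v T - genErr D φ v| ≤ ε / 2} := by
  obtain ⟨Φ, hfin, -, hrep⟩ := exists_finite_representatives.{w} L (Fin (k + ℓ)) q 0
  have : Finite Φ := hfin
  refine ⟨2 * (Nat.card Φ + ℓ + 2), fun B _ _ _ _ hB D _ ε δ hε hδ t ht => ?_⟩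
  have hcard : (Nat.card (Φ × (Fin ℓ → B)) : ℝ) * (2 * Real.exp (-(2 * t * (ε / 2) ^ 2))) ≤ δ := by
    simpa [Nat.card_prod, Nat.card_fun] using card_mul_exp_le hB hε hδ ht
  refine (le_measureReal_pi_forall_abs_empiricalFreq_sub_le D
    (S := fun a : Φ × (Fin ℓ → B) => errorSet a.1.1 a.2)
    (fun a => (Set.toFinite _).measurableSet) (half_pos hε).le hcard).trans
    (measureReal_mono fun T hT φ v hφ => ?_)
  obtain ⟨ψ, hψ, hψφ⟩ := hrep φ hφ
  have hequiv (u : Fin (k + ℓ) → B) : φ.Realize u ↔ Formula.Realize ψ u := by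
    simpa only [sat_tupleInterpretation_univ] using
      (hψφ (tupleInterpretation L Set.univ u)).symm
  rw [trainErr_eq_empiricalFreq, genErr_eq_measureReal, errorSet_congr hequiv]
  exact hT (⟨ψ, hψ⟩, v)

end Learning

open MeasureTheory in
/-- Theorem 5.7, agnostic PAC learning: with probability at least `1 - δ` over
`t ≥ s*⌈log(n/δ)/ε²⌉` training examples drawn i.i.d. from a distribution `D` on
`U(B)^k × {0,1}`, every hypothesis from the class `H` of syntactically `r*`-local formulas of
quantifier rank at most `q*` (with parameters) minimising the training error has
generalisation error at most `min_{C ∈ C} err_D(C) + ε`, where `C` is the class of concepts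
defined by formulas of quantifier rank at most `q` (with parameters). -/
theorem statement_16 {L : FirstOrder.Language} [L.IsRelational] [Finite L.Symbols]
    (k ℓ q : ℕ) (dlt : ℕ → L.Formula (Fin 2)) (hdlt : ∀ r, IsDistFormula.{w} L r (dlt r)) :
    ∃ qs rs ss : ℕ, ∀ (B : Type w) [L.Structure B] [Fintype B]
      [MeasurableSpace ((Fin k → B) × Bool)] [MeasurableSingletonClass ((Fin k → B) × Bool)],
      2 ≤ Fintype.card B →
      ∀ D : Measure ((Fin k → B) × Bool), IsProbabilityMeasure D →
      ∀ ε δ : ℝ, ε ∈ Set.Ioo (0 : ℝ) 1 → δ ∈ Set.Ioo (0 : ℝ) 1 →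
      ∀ t : ℕ, ss * ⌈Real.log ((Fintype.card B : ℝ) / δ) / ε ^ 2⌉₊ ≤ t →
      ENNReal.ofReal (1 - δ) ≤
        Measure.pi (fun _ : Fin t => D)
          {T : Fin t → (Fin k → B) × Bool |
            ∀ (φs : L.Formula (Fin (k + ℓ))) (vs : Fin ℓ → B),
              SynLocal (dlt rs) φs → qRank φs ≤ qs →
              (∀ (φs' : L.Formula (Fin (k + ℓ))) (vs' : Fin ℓ → B),
                SynLocal (dlt rs) φs' → qRank φs' ≤ qs →
                trainErr φs vs T ≤ trainErr φs' vs' T) →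
              ∀ (φ : L.Formula (Fin (k + ℓ))) (v : Fin ℓ → B), qRank φ ≤ q →
                genErr D φs vs ≤ genErr D φ v + ε} := by
  obtain ⟨rs, qs, hlocal⟩ := exists_synLocal_equiv.{w} (k + ℓ) q hdlt
  obtain ⟨ss, hconv⟩ := exists_forall_abs_trainErr_sub_genErr_le.{w} L k ℓ qs
  refine ⟨qs, rs, ss, fun B _ _ _ _ hB D _ ε δ hε hδ t ht => ?_⟩
  refine ENNReal.ofReal_le_of_le_toReal ((hconv B hB D hε.1 hδ ht).trans
    (measureReal_mono fun T hT φs vs _ hφs hmin φ v hφ => ?_))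
  obtain ⟨φ', hφ'local, hφ'rank, hequiv⟩ := hlocal B φ hφ
  have hgen : genErr D φ' v = genErr D φ v := by
    rw [genErr_eq_measureReal, genErr_eq_measureReal, errorSet_congr hequiv]
  calc genErr D φs vs
      ≤ trainErr φs vs T + ε / 2 := by linarith [(abs_le.1 (hT φs vs hφs)).1]
    _ ≤ trainErr φ' v T + ε / 2 := by gcongr; exact hmin φ' v hφ'local hφ'rank
    _ ≤ genErr D φ v + ε := by linarith [(abs_le.1 (hT φ' v hφ'rank)).2]
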